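/- Let ψ satisfy the hypotheses of the decay theorem: differentiable with n vanishing moments and the norms ‖ψ‖_{1,∞}, ‖x^{n+1}ψ‖_{1,∞}, ‖x^n ψ‖₁ finite. Then Hψ also has n vanishing moments: ∫ x^k Hψ(x) dx = 0 for 0 ≤ k < n. -/

import Mathlib

open MeasureTheory Filter Real Set

namespace HilbertAux

/-- truncated kernel -/
noncomputable def ker (ε t : ℝ) : ℝ := indicator {t : ℝ | ε < |t|} (fun t => 1 / t) t

lemma meas_set (ε : ℝ) : MeasurableSet {t : ℝ | ε < |t|} :=
  measurableSet_lt measurable_const (by fun_prop)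

lemma ker_meas (ε : ℝ) : Measurable (ker ε) :=
  Measurable.indicator (by fun_prop) (meas_set ε)

lemma ker_bound {ε : ℝ} (hε : 0 < ε) (t : ℝ) : ‖ker ε t‖ ≤ 1 / ε := by
  unfold ker indicator
  split_ifs with h
  · have h' : ε < |t| := h
    rw [norm_div, norm_one, Real.norm_eq_abs]
    exact one_div_le_one_div_of_le hε h'.le
  · simp; exact hε.le

lemma ker_neg (ε t : ℝ) : ker ε (-t) = - ker ε t := by
  unfold ker indicator
  simp only [mem_ofPred_eq, abs_neg]
  split_ifs <;> simp [div_neg]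

lemma G_eq (ε : ℝ) (f : ℝ → ℝ) (x : ℝ) :
    ∫ t in {t : ℝ | ε < |t|}, f (x - t) / t = ∫ t, ker ε t * f (x - t) := by
  rw [← integral_indicator (meas_set ε)]
  congr 1
  ext t
  unfold ker indicator
  split_ifs <;> ring

lemma G_eq' (ε : ℝ) (f : ℝ → ℝ) (x : ℝ) :
    ∫ t, ker ε t * f (x - t) = ∫ u, ker ε (x - u) * f u := by
  rw [← integral_sub_left_eq_self _ volume x]
  simp

lemma int_ker {ε : ℝ} (hε : 0 < ε) {f : ℝ → ℝ} (hf : Integrable f) :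
    Integrable (fun t => ker ε t * f t) :=
  hf.bdd_mul (ker_meas ε).aestronglyMeasurable (Eventually.of_forall (ker_bound hε))

lemma int_ker_sub {ε : ℝ} (hε : 0 < ε) {f : ℝ → ℝ} (hf : Integrable f) (x : ℝ) :
    Integrable (fun t => ker ε t * f (x - t)) :=
  int_ker hε (hf.comp_sub_left x)

/-- multiplication by x -/
lemma step {f h : ℝ → ℝ} (hf : Integrable f) (hxf : Integrable (fun x => x * f x)) (x : ℝ)
    (H : Tendsto (fun ε : ℝ => ∫ t, ker ε t * f (x - t)) (nhdsWithin 0 (Ioi 0)) (nhds (h x))) :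
    Tendsto (fun ε : ℝ => ∫ t, ker ε t * ((x - t) * f (x - t))) (nhdsWithin 0 (Ioi 0))
      (nhds (x * h x - ∫ t, f t)) := by
  have h1 : Tendsto (fun ε : ℝ => ∫ t, indicator {t : ℝ | ε < |t|} (fun t => f (x - t)) t)
      (nhdsWithin 0 (Ioi 0)) (nhds (∫ t, f t)) := by
    rw [← integral_sub_left_eq_self f volume x]
    apply tendsto_integral_filter_of_dominated_convergence (fun t => ‖f (x - t)‖)
    · exact Eventually.of_forall fun ε =>
        ((hf.comp_sub_left x).aestronglyMeasurable).indicator (meas_set ε)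
    · exact Eventually.of_forall fun ε => Eventually.of_forall fun t =>
        norm_indicator_le_norm_self _ _
    · exact (hf.comp_sub_left x).norm
    · have : ∀ᵐ t : ℝ, t ≠ 0 := by simp [ae_iff]
      filter_upwards [this] with t ht
      apply tendsto_const_nhds.congr'
      have : ∀ᶠ ε : ℝ in nhdsWithin 0 (Ioi 0), ε < |t| :=
        nhdsWithin_le_nhds (Iio_mem_nhds (abs_pos.2 ht))
      filter_upwards [this] with ε hε
      rw [indicator_of_mem]
      exact hε
  refine ((H.const_mul x).sub h1).congr' ?_
  filter_upwards [self_mem_nhdsWithin] with ε hε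
  have hε : 0 < ε := hε
  rw [← integral_const_mul, ← integral_sub ((int_ker_sub hε hf x).const_mul x)
    ((hf.comp_sub_left x).indicator (meas_set ε))]
  congr 1
  ext t
  unfold ker indicator
  split_ifs with h
  · have : t ≠ 0 := by
      rintro rfl
      simp at h; linarith
    field_simp
  · simp

lemma int_indicator (c : ℝ) : Integrable (indicator (Icc (-1:ℝ) 1) (fun _ => c)) :=
  (integrable_indicator_iff measurableSet_Icc).2 (by simp)

/-- uniform bound -/
lemma unif {f : ℝ → ℝ} (hd : Differentiable ℝ f) (hf : Integrable f) (M : ℝ)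
    (hM : ∀ x, |deriv f x| ≤ M) :
    ∃ C, ∀ ε, 0 < ε → ε ≤ 1 → ∀ x, |∫ t, ker ε t * f (x - t)| ≤ C := by
  refine ⟨M * 2 + ∫ t, |f t|, fun ε hε hε1 x => ?_⟩
  have hM0 : 0 ≤ M := (abs_nonneg _).trans (hM 0)
  have lip : ∀ a b, |f a - f b| ≤ M * |a - b| := fun a b =>
    Convex.norm_image_sub_le_of_norm_deriv_le (s := univ) (fun y _ => hd y)
      (fun y _ => hM y) convex_univ (mem_univ b) (mem_univ a)
  let q : ℝ → ℝ := fun t => ker ε t - ker 1 t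
  have q_abs : ∀ t, q t = indicator {t : ℝ | ε < |t| ∧ |t| ≤ 1} (fun t => 1 / t) t := by
    intro t
    simp only [q, ker, indicator, mem_ofPred_eq]
    split_ifs with h1 h2 h3 h3 h4 h5 <;> first | (exfalso; grind) | simp
  have q_meas : Measurable q := (ker_meas ε).sub (ker_meas 1)
  have q_int : Integrable q := by
    refine (int_indicator (1/ε)).mono' q_meas.aestronglyMeasurable (Eventually.of_forall fun t => ?_)
    rw [q_abs]
    by_cases h : ε < |t| ∧ |t| ≤ 1
    · rw [indicator_of_mem (by exact h), indicator_of_mem (by exact abs_le.1 h.2), norm_div, norm_one,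
        Real.norm_eq_abs]
      exact one_div_le_one_div_of_le hε h.1.le
    · rw [indicator_of_notMem (by exact h), norm_zero]
      exact indicator_nonneg (fun _ _ => by positivity) _
  have q0 : ∫ t, q t = 0 := by
    have h := integral_neg_eq_self q volume
    have h2 : ∀ t, q (-t) = - q t := fun t => by simp only [q, ker_neg]; ring
    simp only [h2, integral_neg] at h
    linarith
  have e1 : ∫ t, ker ε t * f (x - t) = (∫ t, q t * (f (x - t) - f x)) + ∫ t, ker 1 t * f (x - t) := by
    have i1 := int_ker_sub hε hf x
    have i2 := int_ker_sub one_pos hf x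
    have i3 : Integrable (fun t => q t * (f (x - t) - f x)) := by
      refine ((i1.sub i2).sub (q_int.mul_const (f x))).congr (Eventually.of_forall fun t => ?_)
      simp only [q, Pi.sub_apply]; ring
    have e2 : ∫ t, q t * f x = 0 := by rw [integral_mul_const, q0, zero_mul]
    rw [← integral_add i3 i2, ← add_zero (∫ t, (q t * (f (x - t) - f x) + ker 1 t * f (x - t))), ← e2,
      ← integral_add (f := fun t => q t * (f (x - t) - f x) + ker 1 t * f (x - t))
        (i3.add i2) (q_int.mul_const (f x))]
    congr 1
    ext t
    simp only [q]; ring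
  rw [e1]
  refine (abs_add_le _ _).trans (add_le_add ?_ ?_)
  · have := norm_integral_le_of_norm_le (f := fun t => q t * (f (x - t) - f x)) (int_indicator M)
      (Eventually.of_forall fun t => ?_)
    · refine this.trans ?_
      rw [integral_indicator measurableSet_Icc]
      simp
      norm_num
      linarith
    · rw [q_abs]
      by_cases h : ε < |t| ∧ |t| ≤ 1
      · rw [indicator_of_mem (by exact h), indicator_of_mem (by exact abs_le.1 h.2), norm_mul, norm_div,
          norm_one, Real.norm_eq_abs, Real.norm_eq_abs]
        have := lip (x - t) x
        have e : x - t - x = - t := by ring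
        rw [e, abs_neg] at this
        have ht : 0 < |t| := hε.trans h.1
        rw [div_mul_eq_mul_div, one_mul, div_le_iff₀ ht]
        exact this
      · rw [indicator_of_notMem (by exact h), zero_mul, norm_zero]
        exact indicator_nonneg (fun _ _ => hM0) _
  · rw [← integral_sub_left_eq_self (fun t => |f t|) volume x]
    refine norm_integral_le_of_norm_le (f := fun t => ker 1 t * f (x - t)) (hf.comp_sub_left x).norm (Eventually.of_forall fun t => ?_)
    rw [norm_mul]
    have := ker_bound one_pos t
    rw [one_div_one] at this
    exact mul_le_of_le_one_left (norm_nonneg (f (x - t))) this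

noncomputable def eta (s x : ℝ) : ℝ := (1 + (s * x) ^ 2)⁻¹

lemma eta_pos (s x : ℝ) : 0 < eta s x := by unfold eta; positivity

lemma eta_le (s x : ℝ) : eta s x ≤ 1 := by
  unfold eta; exact inv_le_one_of_one_le₀ (by nlinarith [sq_nonneg (s * x)])

lemma eta_int {s : ℝ} (hs : 0 < s) : Integrable (eta s) :=
  (integrable_inv_one_add_sq).comp_mul_left' hs.ne'

lemma eta_integral {s : ℝ} (hs : 0 < s) : ∫ x, eta s x = π / s := by
  unfold eta
  rw [Measure.integral_comp_mul_left (fun x => (1 + x ^ 2)⁻¹) s, integral_univ_inv_one_add_sq,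
    abs_of_pos (by positivity)]
  simp; ring

lemma J_bound {s ε : ℝ} (hs : 0 < s) (hε : 0 < ε) (y : ℝ) :
    |∫ x, ker ε (x - y) * eta s x| ≤ 2 * π * s * |y| := by
  have e0 : ∫ x, ker ε (x - y) * eta s x = ∫ t, ker ε t * eta s (y + t) := by
    rw [← integral_add_left_eq_self _ y]
    simp
  have e1 : ∫ t, ker ε t * eta s (y + t) = - ∫ t, ker ε t * eta s (y - t) := by
    rw [← integral_neg_eq_self, ← integral_neg]
    congr 1
    ext t
    rw [ker_neg]; ring_nf
  have i1 : Integrable (fun t => ker ε t * eta s (y + t)) :=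
    int_ker hε ((eta_int hs).comp_add_left y)
  have i2 := int_ker_sub hε (eta_int hs) y
  have e2 : ∫ t, ker ε t * eta s (y + t)
      = (1 / 2) * ∫ t, (ker ε t * eta s (y + t) - ker ε t * eta s (y - t)) := by
    rw [integral_sub i1 i2]; linarith
  rw [e0, e2, abs_mul]
  have e3 : ∫ t, (4 * s ^ 2 * |y|) * eta s (y - t) = 4 * π * s * |y| := by
    rw [integral_const_mul, integral_sub_left_eq_self (eta s) volume y, eta_integral hs]
    field_simp
  have := norm_integral_le_of_norm_le
    (f := fun t => ker ε t * eta s (y + t) - ker ε t * eta s (y - t))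
    (((eta_int hs).comp_sub_left y).const_mul (4 * s ^ 2 * |y|)) (Eventually.of_forall fun t => ?_)
  · rw [e3, Real.norm_eq_abs] at this
    rw [abs_of_pos (by norm_num : (0:ℝ) < 1 / 2)]
    linarith
  · have hpos := eta_pos s (y - t)
    by_cases h : ε < |t|
    · have ht : t ≠ 0 := by
        rintro rfl
        simp at h; linarith
      have : ker ε t * eta s (y + t) - ker ε t * eta s (y - t)
          = - (4 * s ^ 2 * y) * eta s (y - t) * eta s (y + t) := by
        unfold ker eta
        rw [indicator_of_mem (by exact h)]
        have h1 : 1 + (s * (y + t)) ^ 2 ≠ 0 := by positivity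
        have h2 : 1 + (s * (y - t)) ^ 2 ≠ 0 := by positivity
        field_simp
        ring
      rw [this, norm_mul, norm_mul, norm_neg, Real.norm_eq_abs, Real.norm_eq_abs, Real.norm_eq_abs,
        abs_of_pos hpos, abs_of_pos (eta_pos s (y + t)), abs_mul, abs_of_pos (by positivity : 0 < 4 * s ^ 2)]
      exact mul_le_of_le_one_right (by positivity) (eta_le _ _)
    · unfold ker
      rw [indicator_of_notMem (by exact h)]
      simp only [zero_mul, sub_zero, norm_zero]
      positivity

lemma pair_bound {f : ℝ → ℝ} (hf : Integrable f) (hxf : Integrable (fun x => x * f x))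
    {s ε : ℝ} (hs : 0 < s) (hε : 0 < ε) :
    |∫ x, eta s x * ∫ t, ker ε t * f (x - t)| ≤ 2 * π * s * ∫ y, |y * f y| := by
  have e1 : ∫ x, eta s x * ∫ t, ker ε t * f (x - t) = ∫ x, ∫ u, ker ε (x - u) * (eta s x * f u) := by
    congr 1
    ext x
    rw [G_eq', ← integral_const_mul]
    congr 1
    ext u
    ring
  have hi : Integrable (Function.uncurry fun x u => ker ε (x - u) * (eta s x * f u))
      (volume.prod volume) := by
    refine ((eta_int hs).mul_prod hf).bdd_mul (c := 1 / ε) (f := fun p : ℝ × ℝ => ker ε (p.1 - p.2)) ?_ ?_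
    · exact ((ker_meas ε).comp (measurable_fst.sub measurable_snd)).aestronglyMeasurable
    · exact Eventually.of_forall fun p => ker_bound hε _
  rw [e1, integral_integral_swap hi, ← integral_const_mul]
  refine norm_integral_le_of_norm_le (f := fun y => ∫ x, ker ε (x - y) * (eta s x * f y)) (hxf.norm.const_mul (2 * π * s)) (Eventually.of_forall fun y => ?_)
  have : ∫ x, ker ε (x - y) * (eta s x * f y) = (∫ x, ker ε (x - y) * eta s x) * f y := by
    rw [← integral_mul_const]
    congr 1
    ext u
    ring
  rw [this, norm_mul, abs_mul, ← mul_assoc, Real.norm_eq_abs, Real.norm_eq_abs]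
  exact mul_le_mul_of_nonneg_right (J_bound hs hε y) (abs_nonneg _)

lemma G_meas (ε : ℝ) {f : ℝ → ℝ} (hf : Continuous f) :
    Measurable (fun x => ∫ t, ker ε t * f (x - t)) := by
  have : StronglyMeasurable (Function.uncurry fun x t => ker ε t * f (x - t)) := by
    apply Measurable.stronglyMeasurable
    exact ((ker_meas ε).comp measurable_snd).mul
      (hf.measurable.comp (measurable_fst.sub measurable_snd))
  exact this.integral_prod_right.measurable

lemma lim_meas {f h : ℝ → ℝ} (hf : Continuous f)
    (H : ∀ x, Tendsto (fun ε : ℝ => ∫ t, ker ε t * f (x - t)) (nhdsWithin 0 (Ioi 0)) (nhds (h x))) :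
    Measurable h :=
  measurable_of_tendsto_metrizable' (nhdsWithin (0:ℝ) (Ioi 0)) (fun ε => G_meas ε hf)
    (tendsto_pi_nhds.2 H)

lemma integral_lim_eq_zero {f h : ℝ → ℝ} (hd : Differentiable ℝ f) (hf : Integrable f)
    (hxf : Integrable (fun x => x * f x)) (M : ℝ) (hM : ∀ x, |deriv f x| ≤ M)
    (H : ∀ x, Tendsto (fun ε : ℝ => ∫ t, ker ε t * f (x - t)) (nhdsWithin 0 (Ioi 0)) (nhds (h x)))
    (hh : Integrable h) : ∫ x, h x = 0 := by
  obtain ⟨C, hC⟩ := unif hd hf M hM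
  have hev : ∀ᶠ ε : ℝ in nhdsWithin 0 (Ioi 0), 0 < ε ∧ ε ≤ 1 :=
    Ioc_mem_nhdsGT one_pos
  have b1 : ∀ s, 0 < s → |∫ x, eta s x * h x| ≤ 2 * π * s * ∫ y, |y * f y| := by
    intro s hs
    have T : Tendsto (fun ε : ℝ => ∫ x, eta s x * ∫ t, ker ε t * f (x - t))
        (nhdsWithin 0 (Ioi 0)) (nhds (∫ x, eta s x * h x)) := by
      apply tendsto_integral_filter_of_dominated_convergence (fun x => eta s x * C)
      · exact Eventually.of_forall fun ε =>
          (eta_int hs).aestronglyMeasurable.mul (G_meas ε hd.continuous).aestronglyMeasurable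
      · filter_upwards [hev] with ε hε
        refine Eventually.of_forall fun x => ?_
        rw [norm_mul, Real.norm_eq_abs, Real.norm_eq_abs, abs_of_pos (eta_pos s x)]
        exact mul_le_mul_of_nonneg_left (hC ε hε.1 hε.2 x) (eta_pos s x).le
      · exact (eta_int hs).mul_const C
      · exact Eventually.of_forall fun x => (H x).const_mul _
    refine le_of_tendsto T.abs ?_
    filter_upwards [hev] with ε hε
    exact pair_bound hf hxf hs hε.1
  have T2 : Tendsto (fun s : ℝ => ∫ x, eta s x * h x) (nhdsWithin 0 (Ioi 0)) (nhds (∫ x, h x)) := by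
    apply tendsto_integral_filter_of_dominated_convergence (fun x => ‖h x‖)
    · filter_upwards [hev] with s hs
      exact (eta_int hs.1).aestronglyMeasurable.mul hh.aestronglyMeasurable
    · refine Eventually.of_forall fun s => Eventually.of_forall fun x => ?_
      rw [norm_mul, Real.norm_eq_abs, abs_of_pos (eta_pos s x)]
      exact mul_le_of_le_one_left (norm_nonneg _) (eta_le _ _)
    · exact hh.norm
    · refine Eventually.of_forall fun x => ?_
      have : Continuous (fun s : ℝ => eta s x * h x) := by
        unfold eta
        refine Continuous.mul (Continuous.inv₀ (by fun_prop) fun s => by positivity) continuous_const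
      have h2 := this.tendsto 0
      simp only [eta, zero_mul] at h2
      simp at h2
      exact tendsto_nhdsWithin_of_tendsto_nhds h2
  have T3 : Tendsto (fun s : ℝ => 2 * π * s * ∫ y, |y * f y|) (nhdsWithin 0 (Ioi 0)) (nhds 0) := by
    have : Continuous (fun s : ℝ => 2 * π * s * ∫ y, |y * f y|) := by fun_prop
    have h2 := this.tendsto 0
    simp only [mul_zero, zero_mul] at h2
    exact tendsto_nhdsWithin_of_tendsto_nhds h2
  have := le_of_tendsto_of_tendsto T2.abs T3 (by
    filter_upwards [hev] with s hs
    exact b1 s hs.1)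
  exact abs_eq_zero.1 (le_antisymm this (abs_nonneg _))

lemma lim_bound {f h : ℝ → ℝ} (hd : Differentiable ℝ f) (hf : Integrable f) (M : ℝ)
    (hM : ∀ x, |deriv f x| ≤ M)
    (H : ∀ x, Tendsto (fun ε : ℝ => ∫ t, ker ε t * f (x - t)) (nhdsWithin 0 (Ioi 0)) (nhds (h x))) :
    ∃ C, ∀ x, |h x| ≤ C := by
  obtain ⟨C, hC⟩ := unif hd hf M hM
  refine ⟨C, fun x => le_of_tendsto (H x).abs ?_⟩
  have hev : ∀ᶠ ε : ℝ in nhdsWithin 0 (Ioi 0), 0 < ε ∧ ε ≤ 1 :=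
    Ioc_mem_nhdsGT one_pos
  filter_upwards [hev] with ε hε
  exact hC ε hε.1 hε.2 x

lemma abs_pow_le {x : ℝ} {j m : ℕ} (h : j ≤ m) : |x| ^ j ≤ 1 + |x| ^ m := by
  rcases le_total |x| 1 with h1 | h1
  · have := pow_le_one₀ (n := j) (abs_nonneg x) h1
    have := pow_nonneg (abs_nonneg x) m
    linarith
  · have := pow_le_pow_right₀ h1 h
    linarith

/-- Derivative bound for `x ^ k * ψ`. -/
lemma deriv_bound {ψ : ℝ → ℝ} {n k : ℕ} (hk : k ≤ n) (hdiff : Differentiable ℝ ψ)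
    (M : ℝ) (hM : ∀ x, |deriv ψ x| ≤ M) (M' : ℝ)
    (hM' : ∀ x, |deriv (fun x => x ^ (n + 1) * ψ x) x| ≤ M') :
    ∃ C, ∀ x, |deriv (fun x => x ^ k * ψ x) x| ≤ C := by
  have hM0 : 0 ≤ M := (abs_nonneg _).trans (hM 0)
  have hM0' : 0 ≤ M' := (abs_nonneg _).trans (hM' 0)
  have hder : ∀ (m : ℕ) x, deriv (fun x => x ^ m * ψ x) x = m * x ^ (m - 1) * ψ x + x ^ m * deriv ψ x := by
    intro m x
    exact ((hasDerivAt_pow m x).mul (hdiff x).hasDerivAt).deriv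
  obtain ⟨B, hB⟩ := (isCompact_Icc (a := (-1:ℝ)) (b := 1)).exists_bound_of_continuousOn
    hdiff.continuous.continuousOn
  have hB0 : 0 ≤ B := (norm_nonneg _).trans (hB 0 (by simp))
  refine ⟨(k * B + M) + (k * M' + (n + 2) * M'), fun x => ?_⟩
  rw [hder]
  refine (abs_add_le _ _).trans ?_
  rw [abs_mul, abs_mul, abs_mul, abs_pow, abs_pow, Nat.abs_cast]
  rcases le_total |x| 1 with h1 | h1
  · have p1 := pow_le_one₀ (n := k - 1) (abs_nonneg x) h1
    have p2 := pow_le_one₀ (n := k) (abs_nonneg x) h1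
    have hb : |ψ x| ≤ B := hB x (abs_le.1 h1)
    have a1 : (k:ℝ) * |x| ^ (k - 1) * |ψ x| ≤ k * 1 * B := by gcongr
    have a2 : |x| ^ k * |deriv ψ x| ≤ 1 * M := by gcongr; exact hM x
    have : 0 ≤ k * M' + (n + 2) * M' := by positivity
    linarith
  · have hx : 0 < |x| := by linarith
    have lip : |x ^ (n + 1) * ψ x| ≤ M' * |x| := by
      have := Convex.norm_image_sub_le_of_norm_deriv_le (f := fun x => x ^ (n + 1) * ψ x)
        (s := univ) (C := M') (x := 0) (y := x) (fun y _ => by fun_prop)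
        (fun y _ => hM' y) convex_univ (mem_univ _) (mem_univ _)
      simpa using this
    have q1 : |x| ^ n * |ψ x| ≤ M' := by
      rw [abs_mul, abs_pow, pow_succ] at lip
      refine le_of_mul_le_mul_right ?_ hx
      linarith
    have q2 : |x| ^ (n + 1) * |deriv ψ x| ≤ (n + 2) * M' := by
      have e := hder (n + 1) x
      have h3 := hM' x
      rw [← abs_pow, ← abs_mul]
      have : x ^ (n + 1) * deriv ψ x = deriv (fun x => x ^ (n + 1) * ψ x) x - (n + 1) * (x ^ n * ψ x) := by
        rw [e]; push_cast; ring
      rw [this]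
      refine (abs_sub _ _).trans ?_
      rw [abs_mul, abs_mul, abs_pow, abs_of_nonneg (by positivity : (0:ℝ) ≤ n + 1)]
      have : ((n:ℝ) + 1) * (|x| ^ n * |ψ x|) ≤ (n + 1) * M' := by gcongr
      linarith
    have a1 : (k:ℝ) * |x| ^ (k - 1) * |ψ x| ≤ k * M' := by
      rw [mul_assoc]
      refine mul_le_mul_of_nonneg_left (le_trans ?_ q1) (by positivity)
      exact mul_le_mul_of_nonneg_right (pow_le_pow_right₀ h1 (by omega)) (abs_nonneg _)
    have a2 : |x| ^ k * |deriv ψ x| ≤ (n + 2) * M' := by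
      refine le_trans ?_ q2
      exact mul_le_mul_of_nonneg_right (pow_le_pow_right₀ h1 (by omega)) (abs_nonneg _)
    have : 0 ≤ k * B + M := by positivity
    linarith

end HilbertAux

open HilbertAux
/-- Under the hypotheses of the decay theorem (differentiability,
`n` vanishing moments, finiteness of `‖ψ‖_{1,∞}`, `‖x^{n+1}ψ‖_{1,∞}`, `‖x^n ψ‖₁`),
the pointwise principal-value Hilbert transform `Hψ` again has `n` vanishing moments:
`x^k Hψ(x)` is integrable and `∫ x^k Hψ(x) dx = 0` for `0 ≤ k < n`. -/
theorem hilbert_transform_vanishing_moments (ψ Hψ : ℝ → ℝ) (n : ℕ)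
    (hdiff : Differentiable ℝ ψ)
    (hmom : ∀ k < n, ∫ x, x ^ k * ψ x = 0)
    (hint : Integrable ψ) (M : ℝ) (hM : ∀ x, |deriv ψ x| ≤ M)
    (hgint : Integrable (fun x => x ^ (n + 1) * ψ x)) (M' : ℝ)
    (hM' : ∀ x, |deriv (fun x => x ^ (n + 1) * ψ x) x| ≤ M')
    (hnint : Integrable (fun x => x ^ n * ψ x))
    (hHψ : ∀ x : ℝ, Tendsto (fun ε : ℝ => (1 / π) * ∫ t in {t : ℝ | ε < |t|}, ψ (x - t) / t)
      (nhdsWithin 0 (Ioi 0)) (nhds (Hψ x))) :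
    ∀ k < n, Integrable (fun x => x ^ k * Hψ x) ∧ ∫ x, x ^ k * Hψ x = 0 := by
  have hpi := Real.pi_pos
  have H0 : ∀ x, Tendsto (fun ε : ℝ => ∫ t, ker ε t * ψ (x - t)) (nhdsWithin 0 (Ioi 0))
      (nhds (π * Hψ x)) := by
    intro x
    refine ((hHψ x).const_mul π).congr fun ε => ?_
    rw [G_eq]
    field_simp
  have hI : ∀ j ≤ n + 1, Integrable (fun x => x ^ j * ψ x) := by
    intro j hj
    have hc := hdiff.continuous
    refine (hint.norm.add hgint.norm).mono' (by fun_prop) (Eventually.of_forall fun x => ?_)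
    simp only [Pi.add_apply, norm_mul, norm_pow, Real.norm_eq_abs]
    have := mul_le_mul_of_nonneg_right (abs_pow_le (x := x) hj) (abs_nonneg (ψ x))
    linarith
  have hstep : ∀ j ≤ n, ∀ x, Tendsto (fun ε : ℝ => ∫ t, ker ε t * ((x - t) ^ j * ψ (x - t)))
      (nhdsWithin 0 (Ioi 0)) (nhds (x ^ j * (π * Hψ x))) := by
    intro j
    induction j with
    | zero => intro _ x; simpa using H0 x
    | succ j ih =>
      intro hj x
      have := step (f := fun x => x ^ j * ψ x) (h := fun x => x ^ j * (π * Hψ x)) (hI j (by omega))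
        ((hI (j + 1) (by omega)).congr (Eventually.of_forall fun x => by simp only; ring)) x
        (ih (by omega) x)
      rw [hmom j (by omega), sub_zero] at this
      convert this using 1
      · ext ε; congr 1; ext t; ring
      · congr 1; ring
  have hlast : ∀ x, Tendsto (fun ε : ℝ => ∫ t, ker ε t * ((x - t) ^ (n + 1) * ψ (x - t)))
      (nhdsWithin 0 (Ioi 0)) (nhds (x ^ (n + 1) * (π * Hψ x) - ∫ t, t ^ n * ψ t)) := by
    intro x
    have := step (f := fun x => x ^ n * ψ x) (h := fun x => x ^ n * (π * Hψ x)) hnint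
        (hgint.congr (Eventually.of_forall fun x => by simp only; ring)) x
        (hstep n le_rfl x)
    convert this using 1
    · ext ε; congr 1; ext t; ring
    · congr 1; ring
  obtain ⟨C0, hC0⟩ := lim_bound hdiff hint M hM H0
  obtain ⟨C1, hC1⟩ := lim_bound (f := fun x => x ^ (n + 1) * ψ x) (by fun_prop) hgint M' hM' hlast
  have hmeas : Measurable (fun x => π * Hψ x) := lim_meas hdiff.continuous H0
  intro k hk
  have hint' : Integrable (fun x => x ^ k * (π * Hψ x)) := by
    set c := |∫ t, t ^ n * ψ t|
    refine (integrable_inv_one_add_sq.const_mul ((2 * C0 + 2 * (C1 + c)))).mono'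
      (by fun_prop) (Eventually.of_forall fun x => ?_)
    have h0 := hC0 x
    have h1 : |x| ^ (n + 1) * |π * Hψ x| ≤ C1 + c := by
      have := hC1 x
      rw [← abs_pow, ← abs_mul]
      have h2 := abs_sub_abs_le_abs_sub (x ^ (n + 1) * (π * Hψ x)) (∫ t, t ^ n * ψ t)
      linarith
    rw [norm_mul, norm_pow, Real.norm_eq_abs, Real.norm_eq_abs, ← div_eq_mul_inv,
      le_div_iff₀ (by positivity)]
    have a1 : |x| ^ k ≤ 1 + |x| ^ (n + 1) := abs_pow_le (by omega)
    have a2 : |x| ^ (k + 2) ≤ 1 + |x| ^ (n + 1) := abs_pow_le (by omega)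
    have a3 : |x| ^ k * (1 + x ^ 2) ≤ 2 * (1 + |x| ^ (n + 1)) := by
      rw [← sq_abs x]
      have : |x| ^ k * (1 + |x| ^ 2) = |x| ^ k + |x| ^ (k + 2) := by ring
      linarith
    have := mul_le_mul_of_nonneg_right a3 (abs_nonneg (π * Hψ x))
    nlinarith
  obtain ⟨C, hC⟩ := deriv_bound hk.le hdiff M hM M' hM'
  have key := integral_lim_eq_zero (f := fun x => x ^ k * ψ x) (by fun_prop) (hI k (by omega))
    ((hI (k + 1) (by omega)).congr (Eventually.of_forall fun x => by simp only; ring)) C hC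
    (hstep k hk.le) hint'
  have e : (fun x => x ^ k * Hψ x) = fun x => π⁻¹ * (x ^ k * (π * Hψ x)) := by
    ext x
    field_simp
  rw [e]
  refine ⟨hint'.const_mul _, ?_⟩
  rw [integral_const_mul, key, mul_zero]
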